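/- Let N ≥ 3, α ∈ (0, N), and p ≥ (N+α)/(N−2). Then there is a constant C > 0 such that for every u ∈ D^{1,2}(G) the Sobolev-type inequality holds: ∑_{x∈G} (R_α ∗ |u|^p)(x)·|u(x)|^p ≤ C·‖u‖_{D^{1,2}}^{2p}. -/

import Mathlib

open Filter Topology

noncomputable section

namespace Choquard

variable {G : Type*}

/-- The word metric on the Cayley graph of `(G, S)`: the least `k` such that
`y = x * s₁ * ⋯ * s_k` with each `sᵢ ∈ S`. -/
def wordDist [Group G] (S : Finset G) (x y : G) : ℕ :=
  sInf {k : ℕ | ∃ l : List G, (∀ s ∈ l, s ∈ S) ∧ l.length = k ∧ y = x * l.prod}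

/-- Convolution against a kernel: `(R ∗ f)(x) = ∑_{y ∈ G} R(x,y) f(y)`. -/
def conv (R : G → G → ℝ) (f : G → ℝ) (x : G) : ℝ := ∑' y, R x y * f y

/-- The `ℓ^q(G)` norm of `u`. -/
def lpNorm (q : ℝ) (u : G → ℝ) : ℝ := (∑' x, |u x| ^ q) ^ (1 / q)

/-- `u ∈ ℓ^q(G)`. -/
def Memlp (q : ℝ) (u : G → ℝ) : Prop := Summable fun x : G => |u x| ^ q

/-- `|∇u(x)|_p^p = ∑_{y ∼ x} |u(y) − u(x)|^p`, where `y ∼ x` iff `y = x * s`, `s ∈ S`. -/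
def gradP [Group G] (S : Finset G) (p : ℝ) (u : G → ℝ) (x : G) : ℝ :=
  ∑ s ∈ S, |u (x * s) - u x| ^ p

/-- The `D^{1,p}` norm `(∑_x ∑_{y ∼ x} |u(y) − u(x)|^p)^{1/p}`. -/
def D1Norm [Group G] (S : Finset G) (p : ℝ) (u : G → ℝ) : ℝ :=
  (∑' x, gradP S p u x) ^ (1 / p)

/-- `u ∈ D^{1,p}(G) = {u ∈ ℓ^{Np/(N−p)}(G) : ‖u‖_{D^{1,p}} < ∞}`. -/
def MemD1p [Group G] (S : Finset G) (N : ℕ) (p : ℝ) (u : G → ℝ) : Prop :=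
  Memlp ((N : ℝ) * p / ((N : ℝ) - p)) u ∧ Summable (gradP S p u)

/-- `|∇u(x)|₂² = ∑_{y ∼ x} (u(y) − u(x))²`. -/
def gradSq [Group G] (S : Finset G) (u : G → ℝ) (x : G) : ℝ :=
  ∑ s ∈ S, (u (x * s) - u x) ^ 2

/-- The `D^{1,2}` norm. -/
def D12Norm [Group G] (S : Finset G) (u : G → ℝ) : ℝ :=
  (∑' x, gradSq S u x) ^ ((1 : ℝ) / 2)

/-- `u ∈ D^{1,2}(G) = {u ∈ ℓ^{2N/(N−2)}(G) : ‖u‖_{D^{1,2}} < ∞}`. -/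
def MemD12 [Group G] (S : Finset G) (N : ℕ) (u : G → ℝ) : Prop :=
  Memlp (2 * (N : ℝ) / ((N : ℝ) - 2)) u ∧ Summable (gradSq S u)

/-- The graph Laplacian `Δu(x) = ∑_{y ∼ x} (u(y) − u(x))`. -/
def lap [Group G] (S : Finset G) (u : G → ℝ) (x : G) : ℝ :=
  ∑ s ∈ S, (u (x * s) - u x)

/-- `u ∈ D^{2,2}(G) = {u ∈ ℓ^{2N/(N−4)}(G) : ‖Δu‖_{ℓ²} < ∞}`. -/
def MemD22 [Group G] (S : Finset G) (N : ℕ) (u : G → ℝ) : Prop :=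
  Memlp (2 * (N : ℝ) / ((N : ℝ) - 4)) u ∧ Summable fun x => (lap S u x) ^ 2

/-- `u ∈ D^{2,p}(G) = {u ∈ ℓ^{Np/(N−2p)}(G) : ‖Δu‖_{ℓ^p} < ∞}`. -/
def MemD2p [Group G] (S : Finset G) (N : ℕ) (p : ℝ) (u : G → ℝ) : Prop :=
  Memlp ((N : ℝ) * p / ((N : ℝ) - 2 * p)) u ∧ Summable fun x => |lap S u x| ^ p

/-- The nonlocal energy `∑_{x ∈ G} (R_α ∗ |u|^p)(x) |u(x)|^p`. -/
def energy (R : G → G → ℝ) (p : ℝ) (u : G → ℝ) : ℝ :=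
  ∑' x, conv R (fun y => |u y| ^ p) x * |u x| ^ p

/-- The optimal constant `K` of the Sobolev-type inequality. -/
def bestK [Group G] (S : Finset G) (N : ℕ) (R : G → G → ℝ) (p : ℝ) : ℝ :=
  sSup {t : ℝ | ∃ u : G → ℝ, MemD12 S N u ∧ D12Norm S u = 1 ∧ t = energy R p u}

/-- The discrete `p`-Laplacian. -/
def pLap [Group G] (S : Finset G) (p : ℝ) (u : G → ℝ) (x : G) : ℝ :=
  ∑ s ∈ S, |u (x * s) - u x| ^ (p - 2) * (u (x * s) - u x)

/-- The cutoff `Ψ_r`, the indicator of `{x : d(x,e) ≥ r + 1}`. -/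
def cutoff [Group G] (S : Finset G) (r : ℕ) (x : G) : ℝ :=
  if r + 1 ≤ wordDist S 1 x then 1 else 0

open Set MeasureTheory
open scoped ENNReal NNReal

/-!
Two inequalities combine.

*Hardy–Littlewood–Sobolev.* By symmetry it suffices to sum `d(x,y)^(-s) f(y) f(x)` over the pairs
with `f y ≤ f x`. For fixed `x`, bound `f y` by `f x` inside the ball of radius `ρ` about `x`, where
the kernel is summed over dyadic shells, and use Hölder's inequality outside it. Hedberg's choice of
`ρ` turns the result into a multiple of `f(x)^r`, where `r = 2N / (2N - s)`.

*Sobolev.* Let `b` be a ball with `2 #A ≤ #b`. An average `g ∈ b` moves at least half of `A` out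
of `A`, while each `g ∈ b` moves at most (radius of `b`) × `#∂A` points out; since `b` can be
chosen with radius of order `#A^(1/N)`, this is the isoperimetric inequality. Applied to the
superlevel sets of `|u|` and integrated against `t^(m-1) dt` with `m = Nq / (N - q)`, it bounds
`‖u‖_m^m` by a multiple of `‖u‖_{D^{1,q}}` times a smaller power of `‖u‖_m`, which is finite by
assumption and can be divided out.

For `s = N - α` the hypothesis on `p` says exactly that `m ≤ p r`, so that
`‖|u|^p‖_r = ‖u‖_{pr}^p ≤ ‖u‖_m^p`.
-/

section Series

variable {X : Type*}

theorem tsum_mul_le_Lp_mul_Lq {p q : ℝ} (hpq : p.HolderConjugate q) (f g : X → ℝ≥0∞) :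
    ∑' x, f x * g x ≤ (∑' x, f x ^ p) ^ (1 / p) * (∑' x, g x ^ q) ^ (1 / q) := by
  let _ : MeasurableSpace X := ⊤
  simpa only [lintegral_count, Pi.mul_apply] using
    ENNReal.lintegral_mul_le_Lp_mul_Lq Measure.count hpq
      (measurable_from_top (f := f)).aemeasurable (measurable_from_top (f := g)).aemeasurable

theorem ofReal_tsum_le {f : X → ℝ} (hf : ∀ x, 0 ≤ f x) :
    ENNReal.ofReal (∑' x, f x) ≤ ∑' x, ENNReal.ofReal (f x) := by
  by_cases h : Summable f
  · exact (ENNReal.ofReal_tsum_of_nonneg hf h).le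
  · simp [tsum_eq_zero_of_not_summable h]

theorem tsum_rpow_le_of_exponent_le {q r : ℝ} (hq : 0 < q) (hqr : q ≤ r) {f : X → ℝ≥0} {L : ℝ≥0}
    (hf : ∑' x, ((f x ^ q : ℝ≥0) : ℝ≥0∞) ≤ (L ^ q : ℝ≥0)) :
    ∑' x, ((f x ^ r : ℝ≥0) : ℝ≥0∞) ≤ (L ^ r : ℝ≥0) := by
  have hfL (x : X) : f x ≤ L :=
    (NNReal.rpow_le_rpow_iff hq).1 <| ENNReal.coe_le_coe.1 <|
      (ENNReal.le_tsum x).trans hf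
  have hsplit (a : ℝ≥0) : a ^ r = a ^ q * a ^ (r - q) := by
    rw [← NNReal.rpow_add_of_nonneg a hq.le (sub_nonneg.2 hqr), add_sub_cancel]
  calc ∑' x, ((f x ^ r : ℝ≥0) : ℝ≥0∞)
      ≤ ∑' x, ((f x ^ q : ℝ≥0) : ℝ≥0∞) * (L ^ (r - q) : ℝ≥0) := by
        refine ENNReal.tsum_le_tsum fun x ↦ ?_
        rw [hsplit, ENNReal.coe_mul]
        gcongr
        exact hfL x
    _ = (∑' x, ((f x ^ q : ℝ≥0) : ℝ≥0∞)) * (L ^ (r - q) : ℝ≥0) := ENNReal.tsum_mul_right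
    _ ≤ (L ^ q : ℝ≥0) * (L ^ (r - q) : ℝ≥0) := by gcongr
    _ = (L ^ r : ℝ≥0) := by rw [← ENNReal.coe_mul, hsplit]

end Series

section DyadicShells

variable {X : Type*}

/-- Sublevel sets of `w` grow at most like those of the distance to a point in dimension `N`. -/
def SublevelGrowthLE (w : X → ℝ≥0) (C : ℝ≥0) (N : ℝ) : Prop :=
  ∀ ρ : ℝ≥0, 0 < ρ → ({x | w x ≤ ρ}.encard : ℝ≥0∞) ≤ (C * ρ ^ N : ℝ≥0)

variable {w : X → ℝ≥0} {C : ℝ≥0} {N s : ℝ}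

theorem SublevelGrowthLE.tsum_shell_le (hw : SublevelGrowthLE w C N) (hs : 0 ≤ s) {ρ : ℝ≥0}
    (hρ : 0 < ρ) :
    ∑' x : {x | w x ∈ Icc ρ (2 * ρ)}, ((w x ^ (-s) : ℝ≥0) : ℝ≥0∞) ≤
      (C * 2 ^ N * ρ ^ (N - s) : ℝ≥0) := by
  calc ∑' x : {x | w x ∈ Icc ρ (2 * ρ)}, ((w x ^ (-s) : ℝ≥0) : ℝ≥0∞)
      ≤ ∑' _ : {x | w x ∈ Icc ρ (2 * ρ)}, ((ρ ^ (-s) : ℝ≥0) : ℝ≥0∞) :=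
        ENNReal.tsum_le_tsum fun x ↦ ENNReal.coe_le_coe.2 <|
          NNReal.rpow_le_rpow_of_nonpos hρ x.2.1 (neg_nonpos.2 hs)
    _ = ({x | w x ∈ Icc ρ (2 * ρ)}.encard : ℝ≥0∞) * (ρ ^ (-s) : ℝ≥0) := ENNReal.tsum_set_const _ _
    _ ≤ ({x | w x ≤ 2 * ρ}.encard : ℝ≥0∞) * (ρ ^ (-s) : ℝ≥0) := by
        gcongr
        exact fun hx ↦ hx.2
    _ ≤ (C * (2 * ρ) ^ N : ℝ≥0) * (ρ ^ (-s) : ℝ≥0) := by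
        gcongr
        exact hw _ (by positivity)
    _ = (C * 2 ^ N * ρ ^ (N - s) : ℝ≥0) := by
        rw [← ENNReal.coe_mul, NNReal.mul_rpow, sub_eq_add_neg, NNReal.rpow_add hρ.ne']
        ring_nf

theorem SublevelGrowthLE.tsum_iUnion_shell_le (hw : SublevelGrowthLE w C N) (hs : 0 ≤ s) {b : ℝ≥0}
    (hb : 0 < b) (hbN : b ^ (N - s) < 1) {ρ : ℝ≥0} (hρ : 0 < ρ) :
    ∑' x : ⋃ k : ℕ, {x | w x ∈ Icc (ρ * b ^ k) (2 * (ρ * b ^ k))}, ((w x ^ (-s) : ℝ≥0) : ℝ≥0∞) ≤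
      (C * 2 ^ N * (1 - b ^ (N - s))⁻¹ * ρ ^ (N - s) : ℝ≥0) := by
  have hpow (k : ℕ) : (ρ * b ^ k) ^ (N - s) = ρ ^ (N - s) * (b ^ (N - s)) ^ k := by
    rw [NNReal.mul_rpow, ← NNReal.rpow_natCast, ← NNReal.rpow_natCast, ← NNReal.rpow_mul,
      ← NNReal.rpow_mul, mul_comm (N - s)]
  calc _ ≤ ∑' k : ℕ, ∑' x : {x | w x ∈ Icc (ρ * b ^ k) (2 * (ρ * b ^ k))},
          ((w x ^ (-s) : ℝ≥0) : ℝ≥0∞) :=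
        ENNReal.tsum_iUnion_le_tsum (fun x ↦ ((w x ^ (-s) : ℝ≥0) : ℝ≥0∞)) _
    _ ≤ ∑' k : ℕ, ((C * 2 ^ N * ρ ^ (N - s) : ℝ≥0) : ℝ≥0∞) * ((b ^ (N - s) : ℝ≥0) : ℝ≥0∞) ^ k := by
        refine ENNReal.tsum_le_tsum fun k ↦ (hw.tsum_shell_le hs (by positivity)).trans_eq ?_
        rw [hpow, ← mul_assoc, ENNReal.coe_mul, ENNReal.coe_pow]
    _ = _ := by
        rw [ENNReal.tsum_mul_left, ENNReal.tsum_geometric, ← ENNReal.coe_one, ← ENNReal.coe_sub,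
          ← ENNReal.coe_inv (tsub_pos_of_lt hbN).ne', ← ENNReal.coe_mul]
        ring_nf

theorem exists_tsum_sublevel_rpow_le (C : ℝ≥0) (hs : 0 ≤ s) (hsN : s < N) :
    ∃ A : ℝ≥0, ∀ {w : X → ℝ≥0}, SublevelGrowthLE w C N → ∀ {ρ : ℝ≥0}, 0 < ρ →
      ∑' x : {x | 0 < w x ∧ w x ≤ ρ}, ((w x ^ (-s) : ℝ≥0) : ℝ≥0∞) ≤
        (A * ρ ^ (N - s) : ℝ≥0) := by
  refine ⟨C * 2 ^ N * (1 - (1 / 2) ^ (N - s))⁻¹ * (1 / 2) ^ (N - s), fun {w} hw {ρ} hρ ↦ ?_⟩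
  have hcover : {x | 0 < w x ∧ w x ≤ ρ} ⊆
      ⋃ k : ℕ, {x | w x ∈ Icc (1 / 2 * ρ * (1 / 2) ^ k) (2 * (1 / 2 * ρ * (1 / 2) ^ k))} := by
    rintro x ⟨hx, hxρ⟩
    obtain ⟨k, hk, hk'⟩ := exists_nat_pow_near ((one_le_div hx).2 hxρ) one_lt_two
    rw [le_div_iff₀ hx] at hk
    rw [div_lt_iff₀ hx, pow_succ] at hk'
    have hinv : (2 : ℝ≥0) ^ k * (1 / 2) ^ k = 1 := by rw [← mul_pow]; norm_num
    refine mem_iUnion.2 ⟨k, ?_, ?_⟩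
    · calc 1 / 2 * ρ * (1 / 2) ^ k ≤ 1 / 2 * (2 ^ k * 2 * w x) * (1 / 2) ^ k := by gcongr
        _ = w x * (2 ^ k * (1 / 2) ^ k) := by ring
        _ = w x := by rw [hinv, mul_one]
    · calc w x = 2 ^ k * w x * (1 / 2) ^ k := by rw [mul_right_comm, hinv, one_mul]
        _ ≤ ρ * (1 / 2) ^ k := by gcongr
        _ = 2 * (1 / 2 * ρ * (1 / 2) ^ k) := by ring
  refine (ENNReal.tsum_mono_subtype (fun x ↦ ((w x ^ (-s) : ℝ≥0) : ℝ≥0∞)) hcover).trans <|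
    (hw.tsum_iUnion_shell_le hs (by norm_num) ?_ (by positivity)).trans_eq ?_
  · exact NNReal.rpow_lt_one (by norm_num) (sub_pos.2 hsN)
  · rw [NNReal.mul_rpow, mul_assoc _ _ (ρ ^ (N - s))]

theorem exists_tsum_superlevel_rpow_le (C : ℝ≥0) (hs : 0 ≤ s) (hNs : N < s) :
    ∃ B : ℝ≥0, ∀ {w : X → ℝ≥0}, SublevelGrowthLE w C N → ∀ {ρ : ℝ≥0}, 0 < ρ →
      ∑' x : {x | ρ ≤ w x}, ((w x ^ (-s) : ℝ≥0) : ℝ≥0∞) ≤ (B * ρ ^ (N - s) : ℝ≥0) := by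
  refine ⟨C * 2 ^ N * (1 - 2 ^ (N - s))⁻¹, fun {w} hw {ρ} hρ ↦ ?_⟩
  have hcover : {x | ρ ≤ w x} ⊆ ⋃ k : ℕ, {x | w x ∈ Icc (ρ * 2 ^ k) (2 * (ρ * 2 ^ k))} := by
    intro x hx
    obtain ⟨k, hk, hk'⟩ := exists_nat_pow_near ((one_le_div hρ).2 hx) one_lt_two
    rw [le_div_iff₀ hρ, mul_comm] at hk
    rw [div_lt_iff₀ hρ, pow_succ] at hk'
    exact mem_iUnion.2 ⟨k, hk, hk'.le.trans_eq (by ring)⟩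
  refine (ENNReal.tsum_mono_subtype (fun x ↦ ((w x ^ (-s) : ℝ≥0) : ℝ≥0∞)) hcover).trans <|
    hw.tsum_iUnion_shell_le hs two_pos ?_ hρ
  exact NNReal.rpow_lt_one_of_one_lt_of_neg one_lt_two (sub_neg.2 hNs)

end DyadicShells

section HardyLittlewoodSobolev

variable {X : Type*}

theorem tsum_tsum_le_two_mul_of_symm {Y : Type*} [LinearOrder Y] {K : X → X → ℝ≥0∞}
    (hK : ∀ x y, K x y = K y x) (f : X → Y) :
    ∑' x, ∑' y, K x y ≤ 2 * ∑' x, ∑' y, {y | f y ≤ f x}.indicator (K x) y := by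
  calc ∑' x, ∑' y, K x y
      ≤ ∑' x, ∑' y, ({y | f y ≤ f x}.indicator (K x) y + {x | f x ≤ f y}.indicator (K y) x) := by
        refine ENNReal.tsum_le_tsum fun x ↦ ENNReal.tsum_le_tsum fun y ↦ ?_
        rcases le_total (f y) (f x) with h | h
        · exact (indicator_of_mem (s := {y | f y ≤ f x}) h (K x)).ge.trans le_self_add
        · exact (hK x y).le.trans <|
            (indicator_of_mem (s := {x | f x ≤ f y}) h (K y)).ge.trans le_add_self
    _ = 2 * ∑' x, ∑' y, {y | f y ≤ f x}.indicator (K x) y := by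
        simp only [ENNReal.tsum_add]
        rw [two_mul, ENNReal.tsum_comm (f := fun x y ↦ {x | f x ≤ f y}.indicator (K y) x)]

variable {N s : ℝ}

theorem holderConjugate_two_mul_div (hs : 0 < s) (hsN : s < N) :
    (2 * N / s).HolderConjugate (2 * N / (2 * N - s)) := by
  have hN : 0 < N := hs.trans hsN
  have : 0 < 2 * N - s := by linarith
  refine Real.holderConjugate_iff.2 ⟨by rw [lt_div_iff₀ hs]; linarith, ?_⟩
  field_simp
  ring

theorem exists_tsum_superlevel_rpow_mul_le (C : ℝ≥0) (hs : 0 < s) (hsN : s < N) :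
    ∃ B : ℝ≥0, ∀ {w : X → ℝ≥0}, SublevelGrowthLE w C N → ∀ {f : X → ℝ≥0} {F ρ : ℝ≥0}, 0 < ρ →
      ∑' x, ((f x ^ (2 * N / (2 * N - s)) : ℝ≥0) : ℝ≥0∞) ≤ (F ^ (2 * N / (2 * N - s)) : ℝ≥0) →
      ∑' x : {x | ρ ≤ w x}, ((w x ^ (-s) * f x : ℝ≥0) : ℝ≥0∞) ≤ (B * ρ ^ (-(s / 2)) * F : ℝ≥0) := by
  have hpq := holderConjugate_two_mul_div hs hsN
  obtain ⟨B, hB⟩ := exists_tsum_superlevel_rpow_le (X := X) C (s := 2 * N) (N := N)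
    (by linarith) (by linarith)
  have hN : 0 < N := hs.trans hsN
  refine ⟨B ^ (s / (2 * N)), fun {w} hw {f F ρ} hρ hf ↦ ?_⟩
  calc ∑' x : {x | ρ ≤ w x}, ((w x ^ (-s) * f x : ℝ≥0) : ℝ≥0∞)
      = ∑' x : {x | ρ ≤ w x}, ((w x ^ (-s) : ℝ≥0) : ℝ≥0∞) * (f x : ℝ≥0∞) := by
        simp only [ENNReal.coe_mul]
    _ ≤ (∑' x : {x | ρ ≤ w x}, ((w x ^ (-s) : ℝ≥0) : ℝ≥0∞) ^ (2 * N / s)) ^ (1 / (2 * N / s)) *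
          (∑' x : {x | ρ ≤ w x}, (f x : ℝ≥0∞) ^ (2 * N / (2 * N - s))) ^
            (1 / (2 * N / (2 * N - s))) := tsum_mul_le_Lp_mul_Lq hpq _ _
    _ ≤ ((B * ρ ^ (N - 2 * N) : ℝ≥0) : ℝ≥0∞) ^ (1 / (2 * N / s)) *
          ((F ^ (2 * N / (2 * N - s)) : ℝ≥0) : ℝ≥0∞) ^ (1 / (2 * N / (2 * N - s))) := by
        gcongr
        · refine le_of_eq_of_le (tsum_congr fun x ↦ ?_) (hB hw hρ)
          rw [← ENNReal.coe_rpow_of_nonneg _ hpq.nonneg, ← NNReal.rpow_mul, neg_mul,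
            mul_div_cancel₀ _ hs.ne']
        · exact hpq.symm.one_div_nonneg
        · refine (ENNReal.tsum_comp_le_tsum_of_injective Subtype.val_injective
            fun x ↦ (f x : ℝ≥0∞) ^ (2 * N / (2 * N - s))).trans (le_of_eq_of_le ?_ hf)
          simp only [ENNReal.coe_rpow_of_nonneg _ hpq.symm.nonneg]
    _ = (B ^ (s / (2 * N)) * ρ ^ (-(s / 2)) * F : ℝ≥0) := by
        rw [← ENNReal.coe_rpow_of_nonneg _ hpq.one_div_nonneg,
          ← ENNReal.coe_rpow_of_nonneg _ hpq.symm.one_div_nonneg, ← ENNReal.coe_mul,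
          NNReal.mul_rpow, ← NNReal.rpow_mul, ← NNReal.rpow_mul,
          mul_one_div_cancel hpq.symm.ne_zero, NNReal.rpow_one, one_div_div]
        congr 4
        field_simp
        ring

theorem exists_tsum_rpow_mul_le_add (C : ℝ≥0) (hs : 0 < s) (hsN : s < N) :
    ∃ A B : ℝ≥0, ∀ {w : X → ℝ≥0}, (∀ x, 0 < w x) → SublevelGrowthLE w C N →
      ∀ {f : X → ℝ≥0} {F t ρ : ℝ≥0}, 0 < ρ → (∀ x, f x ≤ t) →
      ∑' x, ((f x ^ (2 * N / (2 * N - s)) : ℝ≥0) : ℝ≥0∞) ≤ (F ^ (2 * N / (2 * N - s)) : ℝ≥0) →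
      ∑' x, ((w x ^ (-s) * f x : ℝ≥0) : ℝ≥0∞) ≤
        (A * ρ ^ (N - s) * t + B * ρ ^ (-(s / 2)) * F : ℝ≥0) := by
  obtain ⟨A, hA⟩ := exists_tsum_sublevel_rpow_le (X := X) C hs.le hsN
  obtain ⟨B, hB⟩ := exists_tsum_superlevel_rpow_mul_le (X := X) C hs hsN
  refine ⟨A, B, fun {w} hw_pos hw {f F t ρ} hρ hft hf ↦ ?_⟩
  have hcover : (univ : Set X) ⊆ {x | 0 < w x ∧ w x ≤ ρ} ∪ {x | ρ ≤ w x} :=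
    fun x _ ↦ (le_total (w x) ρ).imp (⟨hw_pos x, ·⟩) id
  have hnear : ∑' x : {x | 0 < w x ∧ w x ≤ ρ}, ((w x ^ (-s) * f x : ℝ≥0) : ℝ≥0∞) ≤
      (A * ρ ^ (N - s) * t : ℝ≥0) := by
    calc _ ≤ ∑' x : {x | 0 < w x ∧ w x ≤ ρ}, ((w x ^ (-s) : ℝ≥0) : ℝ≥0∞) * t := by
          refine ENNReal.tsum_le_tsum fun x ↦ ?_
          rw [ENNReal.coe_mul]
          gcongr
          exact hft x
      _ ≤ (A * ρ ^ (N - s) : ℝ≥0) * t := by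
          rw [ENNReal.tsum_mul_right]
          gcongr
          exact hA hw hρ
      _ = (A * ρ ^ (N - s) * t : ℝ≥0) := (ENNReal.coe_mul _ _).symm
  let g : X → ℝ≥0∞ := fun x ↦ (w x ^ (-s) * f x : ℝ≥0)
  calc ∑' x, g x = ∑' x : (univ : Set X), g x := (tsum_univ g).symm
    _ ≤ ∑' x : ↥({x | 0 < w x ∧ w x ≤ ρ} ∪ {x | ρ ≤ w x}), g x :=
        ENNReal.tsum_mono_subtype g hcover
    _ ≤ ∑' x : {x | 0 < w x ∧ w x ≤ ρ}, g x + ∑' x : {x | ρ ≤ w x}, g x :=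
        ENNReal.tsum_union_le g _ _
    _ ≤ (A * ρ ^ (N - s) * t : ℝ≥0) + (B * ρ ^ (-(s / 2)) * F : ℝ≥0) :=
        add_le_add hnear (hB hw hρ hf)
    _ = _ := (ENNReal.coe_add _ _).symm

/-- Hedberg's optimisation: the splitting radius balances the two contributions. -/
theorem exists_mul_tsum_rpow_mul_le (C : ℝ≥0) (hs : 0 < s) (hsN : s < N) :
    ∃ A : ℝ≥0, ∀ {w : X → ℝ≥0}, (∀ x, 0 < w x) → SublevelGrowthLE w C N →
      ∀ {f : X → ℝ≥0} {F t : ℝ≥0}, 0 < F → (∀ x, f x ≤ t) →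
      ∑' x, ((f x ^ (2 * N / (2 * N - s)) : ℝ≥0) : ℝ≥0∞) ≤ (F ^ (2 * N / (2 * N - s)) : ℝ≥0) →
      t * ∑' x, ((w x ^ (-s) * f x : ℝ≥0) : ℝ≥0∞) ≤
        (A * F ^ (2 - 2 * N / (2 * N - s)) * t ^ (2 * N / (2 * N - s)) : ℝ≥0) := by
  obtain ⟨A, B, hAB⟩ := exists_tsum_rpow_mul_le_add (X := X) C hs hsN
  refine ⟨A + B, fun {w} hw_pos hw {f F t} hF hft hf ↦ ?_⟩
  have hNs : 0 < 2 * N - s := by linarith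
  rcases eq_or_ne t 0 with rfl | ht
  · simp
  set r := 2 * N / (2 * N - s) with hr
  set ρ := (F / t) ^ (2 / (2 * N - s)) with hρ
  have hρ_pos : 0 < ρ := NNReal.rpow_pos (div_pos hF (pos_iff_ne_zero.2 ht))
  have hpow (e : ℝ) : ρ ^ e = F ^ (2 / (2 * N - s) * e) * t ^ (-(2 / (2 * N - s) * e)) := by
    rw [hρ, ← NNReal.rpow_mul, NNReal.div_rpow, div_eq_mul_inv, NNReal.rpow_neg]
  have hfar : t * ρ ^ (-(s / 2)) * F = F ^ (2 - r) * t ^ r := by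
    rw [hpow, show 2 - r = 2 / (2 * N - s) * (-(s / 2)) + 1 by rw [hr]; field_simp; ring,
      show r = 1 + -(2 / (2 * N - s) * (-(s / 2))) by rw [hr]; field_simp; ring,
      NNReal.rpow_add hF.ne', NNReal.rpow_add ht, NNReal.rpow_one, NNReal.rpow_one]
    ring
  have hnear : t * ρ ^ (N - s) * t = F ^ (2 - r) * t ^ r := by
    rw [hpow, show 2 - r = 2 / (2 * N - s) * (N - s) by rw [hr]; field_simp; ring,
      show r = 1 + -(2 / (2 * N - s) * (N - s)) + 1 by rw [hr]; field_simp; ring,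
      NNReal.rpow_add ht, NNReal.rpow_add ht, NNReal.rpow_one]
    ring
  calc t * ∑' x, ((w x ^ (-s) * f x : ℝ≥0) : ℝ≥0∞)
      ≤ t * (A * ρ ^ (N - s) * t + B * ρ ^ (-(s / 2)) * F : ℝ≥0) := by
        gcongr
        exact hAB hw_pos hw hρ_pos hft hf
    _ = (A * (t * ρ ^ (N - s) * t) + B * (t * ρ ^ (-(s / 2)) * F) : ℝ≥0) := by
        rw [← ENNReal.coe_mul]
        ring_nf
    _ = ((A + B) * F ^ (2 - r) * t ^ r : ℝ≥0) := by
        rw [hnear, hfar]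
        ring_nf

theorem exists_tsum_indicator_rpow_mul_mul_le (C : ℝ≥0) (hs : 0 < s) (hsN : s < N) :
    ∃ A : ℝ≥0, ∀ {w : X → ℝ≥0}, (∀ x, 0 < w x) → SublevelGrowthLE w C N →
      ∀ {f : X → ℝ≥0} {F : ℝ≥0}, 0 < F →
      ∑' x, ((f x ^ (2 * N / (2 * N - s)) : ℝ≥0) : ℝ≥0∞) ≤ (F ^ (2 * N / (2 * N - s)) : ℝ≥0) →
      ∀ t : ℝ≥0, ∑' x, {x | f x ≤ t}.indicator
        (fun x ↦ ((w x ^ (-s) * f x * t : ℝ≥0) : ℝ≥0∞)) x ≤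
          (A * F ^ (2 - 2 * N / (2 * N - s)) : ℝ≥0) * (t ^ (2 * N / (2 * N - s)) : ℝ≥0) := by
  obtain ⟨A, hA⟩ := exists_mul_tsum_rpow_mul_le (X := X) C hs hsN
  refine ⟨A, fun {w} hw_pos hw {f F} hF hf t ↦ ?_⟩
  have hr : 0 < 2 * N / (2 * N - s) := (holderConjugate_two_mul_div hs hsN).symm.pos
  set r := 2 * N / (2 * N - s)
  let g : X → ℝ≥0 := {x | f x ≤ t}.indicator f
  have hgf (x : X) : g x ≤ f x := indicator_le_self _ f x
  have hgt (x : X) : g x ≤ t := indicator_le' (fun _ h ↦ h) (fun _ _ ↦ zero_le) x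
  have hg : ∑' x, ((g x ^ r : ℝ≥0) : ℝ≥0∞) ≤ (F ^ r : ℝ≥0) :=
    (ENNReal.tsum_le_tsum fun x ↦ by gcongr; exact hgf x).trans hf
  calc ∑' x, {x | f x ≤ t}.indicator (fun x ↦ ((w x ^ (-s) * f x * t : ℝ≥0) : ℝ≥0∞)) x
      = t * ∑' x, ((w x ^ (-s) * g x : ℝ≥0) : ℝ≥0∞) := by
        rw [← ENNReal.tsum_mul_left]
        refine tsum_congr fun x ↦ ?_
        by_cases hx : f x ≤ t <;> simp [g, hx, mul_comm]
    _ ≤ (A * F ^ (2 - r) * t ^ r : ℝ≥0) := hA hw_pos hw hF hgt hg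
    _ = _ := ENNReal.coe_mul _ _

theorem exists_tsum_tsum_rpow_mul_mul_le {d : X → X → ℝ≥0} (hd_pos : ∀ x y, 0 < d x y)
    (hd_symm : ∀ x y, d x y = d y x) {C : ℝ≥0} (hd : ∀ x, SublevelGrowthLE (d x) C N)
    (hs : 0 < s) (hsN : s < N) :
    ∃ A : ℝ≥0, ∀ {f : X → ℝ≥0} {F : ℝ≥0},
      ∑' x, ((f x ^ (2 * N / (2 * N - s)) : ℝ≥0) : ℝ≥0∞) ≤ (F ^ (2 * N / (2 * N - s)) : ℝ≥0) →
      ∑' x, ∑' y, ((d x y ^ (-s) * f y * f x : ℝ≥0) : ℝ≥0∞) ≤ (A * F ^ 2 : ℝ≥0) := by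
  obtain ⟨A, hA⟩ := exists_tsum_indicator_rpow_mul_mul_le (X := X) C hs hsN
  refine ⟨2 * A, fun {f F} hf ↦ ?_⟩
  have hr : 0 < 2 * N / (2 * N - s) := (holderConjugate_two_mul_div hs hsN).symm.pos
  set r := 2 * N / (2 * N - s)
  rcases eq_or_ne F 0 with rfl | hF
  · have hf0 (x : X) : f x = 0 := by
      have hx : ((f x ^ r : ℝ≥0) : ℝ≥0∞) ≤ ((0 ^ r : ℝ≥0) : ℝ≥0∞) := (ENNReal.le_tsum x).trans hf
      simpa [NNReal.zero_rpow hr.ne', NNReal.rpow_eq_zero hr.ne'] using hx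
    simp [hf0]
  let K : X → X → ℝ≥0∞ := fun x y ↦ (d x y ^ (-s) * f y * f x : ℝ≥0)
  have hK (x y : X) : K x y = K y x := by
    simp only [K, hd_symm x y]
    ring_nf
  calc ∑' x, ∑' y, K x y
      ≤ 2 * ∑' x, ∑' y, {y | f y ≤ f x}.indicator (K x) y := tsum_tsum_le_two_mul_of_symm hK f
    _ ≤ 2 * ∑' x, ((A * F ^ (2 - r) : ℝ≥0) : ℝ≥0∞) * (f x ^ r : ℝ≥0) := by
        gcongr with x
        simpa only [K, ENNReal.coe_mul] using hA (hd_pos x) (hd x) (pos_iff_ne_zero.2 hF) hf (f x)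
    _ ≤ 2 * ((A * F ^ (2 - r) : ℝ≥0) * (F ^ r : ℝ≥0)) := by
        rw [ENNReal.tsum_mul_left]
        gcongr
    _ = (2 * A * F ^ 2 : ℝ≥0) := by
        have hF2 : F ^ (2 - r) * F ^ r = F ^ 2 := by
          rw [← NNReal.rpow_add hF, sub_add_cancel, NNReal.rpow_two]
        rw [← hF2]
        push_cast
        ring

end HardyLittlewoodSobolev

section WordMetric

variable [Group G] {S : Finset G}

theorem wordDist_mul_list_prod_le {l : List G} (hl : ∀ s ∈ l, s ∈ S) (x : G) :
    wordDist S x (x * l.prod) ≤ l.length :=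
  Nat.sInf_le ⟨l, hl, rfl, rfl⟩

theorem exists_list_length_eq_wordDist (hS_gen : Subgroup.closure (S : Set G) = ⊤)
    (hS_sym : ∀ s ∈ S, s⁻¹ ∈ S) (x y : G) :
    ∃ l : List G, (∀ s ∈ l, s ∈ S) ∧ l.length = wordDist S x y ∧ y = x * l.prod := by
  have hxy : x⁻¹ * y ∈ (Subgroup.closure (S : Set G)).toSubmonoid := by simp [hS_gen]
  rw [Subgroup.closure_toSubmonoid] at hxy
  obtain ⟨l, hl, hprod⟩ := Submonoid.exists_list_of_mem_closure hxy
  refine Nat.sInf_mem (s := {k | ∃ l : List G, (∀ s ∈ l, s ∈ S) ∧ l.length = k ∧ y = x * l.prod})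
    ⟨l.length, l, fun s hs ↦ (hl s hs).elim id fun h ↦ ?_, rfl, by rw [hprod, mul_inv_cancel_left]⟩
  simpa using hS_sym _ (mem_inv.1 h)

theorem wordDist_self (x : G) : wordDist S x x = 0 := by
  simpa using wordDist_mul_list_prod_le (S := S) (l := []) (by simp) x

theorem wordDist_mul_left (g x y : G) : wordDist S (g * x) (g * y) = wordDist S x y := by
  simp only [wordDist, mul_assoc, mul_right_inj]

theorem wordDist_comm (hS_gen : Subgroup.closure (S : Set G) = ⊤) (hS_sym : ∀ s ∈ S, s⁻¹ ∈ S)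
    (x y : G) : wordDist S x y = wordDist S y x := by
  have hle (x y : G) : wordDist S y x ≤ wordDist S x y := by
    obtain ⟨l, hl, hlen, hy⟩ := exists_list_length_eq_wordDist hS_gen hS_sym x y
    have hinv : ∀ s ∈ (l.map (·⁻¹)).reverse, s ∈ S := by
      simp only [List.mem_reverse, List.mem_map]
      rintro _ ⟨s, hs, rfl⟩
      exact hS_sym s (hl s hs)
    have hx : x = y * (l.map (·⁻¹)).reverse.prod := by
      rw [← List.prod_inv_reverse, hy, mul_inv_cancel_right]
    calc wordDist S y x ≤ (l.map (·⁻¹)).reverse.length := by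
          nth_rewrite 1 [hx]
          exact wordDist_mul_list_prod_le hinv y
      _ = wordDist S x y := by rw [List.length_reverse, List.length_map, hlen]
  exact (hle y x).antisymm (hle x y)

theorem one_le_wordDist (hS_gen : Subgroup.closure (S : Set G) = ⊤) (hS_sym : ∀ s ∈ S, s⁻¹ ∈ S)
    {x y : G} (hxy : x ≠ y) : 1 ≤ wordDist S x y := by
  obtain ⟨l, -, hlen, hy⟩ := exists_list_length_eq_wordDist hS_gen hS_sym x y
  rw [Nat.one_le_iff_ne_zero, ← hlen, Ne, List.length_eq_zero_iff]
  rintro rfl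
  exact hxy (by simpa using hy.symm)

/-- The ball of radius `n` about the identity in the word metric. -/
def wordBall (S : Finset G) (n : ℕ) : Set G := {g | wordDist S 1 g ≤ n}

theorem encard_wordBall_le_of_ncard {C₁ C₂ : ℝ≥0} (hC₁ : 0 < C₁) {N n : ℕ}
    (hn : 1 ≤ n) (hle : C₁ * (n : ℝ≥0) ^ N ≤ (wordBall S n).ncard)
    (hge : ((wordBall S n).ncard : ℝ≥0) ≤ C₂ * n ^ N) :
    ((wordBall S n).encard : ℝ≥0∞) ≤ (C₂ * n ^ N : ℝ≥0) := by
  have hpos : 0 < ((wordBall S n).ncard : ℝ≥0) := lt_of_lt_of_le (by positivity) hle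
  have hfin : (wordBall S n).Finite :=
    finite_of_ncard_ne_zero (Nat.cast_pos.1 hpos).ne'
  rw [← hfin.cast_ncard_eq, ENat.toENNReal_coe]
  exact_mod_cast hge

/-- The word metric with the distance from a point to itself replaced by `1`, so that its negative
powers are Riesz kernels with a finite value on the diagonal. -/
def regularizedDist (S : Finset G) (x y : G) : ℝ≥0 := max 1 (wordDist S x y)

theorem regularizedDist_pos (x y : G) : 0 < regularizedDist S x y :=
  one_pos.trans_le (le_max_left _ _)

theorem regularizedDist_comm (hS_gen : Subgroup.closure (S : Set G) = ⊤)
    (hS_sym : ∀ s ∈ S, s⁻¹ ∈ S) (x y : G) : regularizedDist S x y = regularizedDist S y x := by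
  rw [regularizedDist, wordDist_comm hS_gen hS_sym, regularizedDist]

theorem sublevelGrowthLE_regularizedDist {C : ℝ≥0} {N : ℕ}
    (hball : ∀ n : ℕ, 1 ≤ n → ((wordBall S n).encard : ℝ≥0∞) ≤ (C * n ^ N : ℝ≥0)) (x : G) :
    SublevelGrowthLE (regularizedDist S x) C N := by
  intro ρ _
  rcases lt_or_ge ρ 1 with hρ | hρ
  · have hempty : {y | regularizedDist S x y ≤ ρ} = ∅ :=
      eq_empty_of_forall_notMem fun y hy ↦ hρ.not_ge ((le_max_left _ _).trans hy)
    simp [hempty]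
  have hsub : {y | regularizedDist S x y ≤ ρ} ⊆ (x⁻¹ * ·) ⁻¹' wordBall S ⌊ρ⌋₊ := by
    intro y hy
    have hle : wordDist S x y ≤ ⌊ρ⌋₊ := Nat.le_floor ((le_max_right _ _).trans hy)
    rwa [mem_preimage, wordBall, mem_ofPred_eq, ← wordDist_mul_left x, mul_one, mul_inv_cancel_left]
  calc (({y | regularizedDist S x y ≤ ρ}.encard : ℕ∞) : ℝ≥0∞)
      ≤ (((x⁻¹ * ·) ⁻¹' wordBall S ⌊ρ⌋₊).encard : ℕ∞) := by
        gcongr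
    _ = ((wordBall S ⌊ρ⌋₊).encard : ℕ∞) := by
        rw [encard_preimage_of_bijective (Group.mulLeft_bijective x⁻¹)]
    _ ≤ (C * (⌊ρ⌋₊ : ℝ≥0) ^ N : ℝ≥0) := hball _ (Nat.one_le_floor_iff ρ |>.2 hρ)
    _ ≤ (C * ρ ^ (N : ℝ) : ℝ≥0) := by
        rw [NNReal.rpow_natCast]
        gcongr
        exact Nat.floor_le zero_le

end WordMetric

section Isoperimetry

variable [Group G] {S : Finset G}

/-- The number of points of `A` that leave `A` under right translation by `g`; for `g ∈ S` this
counts the edges of the Cayley graph labelled `g` that lead out of `A`. -/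
def exitCard (A : Set G) (g : G) : ℕ∞ := {x | x ∈ A ∧ x * g ∉ A}.encard

theorem exitCard_mul_le (A : Set G) (g h : G) :
    exitCard A (g * h) ≤ exitCard A g + exitCard A h := by
  have hsub : {x | x ∈ A ∧ x * (g * h) ∉ A} ⊆
      {x | x ∈ A ∧ x * g ∉ A} ∪ (· * g) ⁻¹' {x | x ∈ A ∧ x * h ∉ A} := by
    rintro x ⟨hx, hxgh⟩
    rw [← mul_assoc] at hxgh
    exact or_iff_not_imp_left.2 fun hxg ↦ ⟨not_not.1 fun h ↦ hxg ⟨hx, h⟩, hxgh⟩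
  calc exitCard A (g * h)
      ≤ exitCard A g + ((· * g) ⁻¹' {x | x ∈ A ∧ x * h ∉ A}).encard :=
        (encard_le_encard hsub).trans (encard_union_le _ _)
    _ = exitCard A g + exitCard A h := by
        rw [encard_preimage_of_bijective (Group.mulRight_bijective g), exitCard, exitCard]

theorem exitCard_list_prod_le (A : Set G) {l : List G} (hl : ∀ s ∈ l, s ∈ S) :
    exitCard A l.prod ≤ l.length * ∑ s ∈ S, exitCard A s := by
  induction l with
  | nil => simp [exitCard]
  | cons a l ih =>
    rw [List.forall_mem_cons] at hl
    calc exitCard A (a :: l).prod ≤ exitCard A a + exitCard A l.prod := by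
          rw [List.prod_cons]
          exact exitCard_mul_le A a l.prod
      _ ≤ ∑ s ∈ S, exitCard A s + l.length * ∑ s ∈ S, exitCard A s :=
          add_le_add (Finset.single_le_sum (fun _ _ ↦ zero_le) hl.1) (ih hl.2)
      _ = (a :: l).length * ∑ s ∈ S, exitCard A s := by
          rw [List.length_cons]
          push_cast
          ring

open scoped Finset in
/-- For `x ∈ A`, at most `#A` of the translates `x * g` with `g ∈ b` lie in `A`, so on average over
`g ∈ b` at least half of the points of `A` leave `A`. -/
theorem card_le_two_mul_of_forall_exitCard_le {A b : Finset G} (hb : b.Nonempty)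
    (hAb : 2 * #A ≤ #b) {E : ℕ∞} (hE : ∀ g ∈ b, exitCard (A : Set G) g ≤ E) : #A ≤ 2 * E := by
  classical
  rcases eq_or_ne E ⊤ with rfl | hE_top
  · simp
  lift E to ℕ using hE_top
  have hstay (g : G) (hg : g ∈ b) : #A ≤ #{x ∈ A | x * g ∈ A} + E := by
    have hexit : #{x ∈ A | x * g ∉ A} ≤ E := by
      have := hE g hg
      rw [exitCard, ← Nat.cast_le (α := ℕ∞), ← encard_coe_eq_coe_finsetCard] at *
      simpa using this
    rw [← Finset.card_filter_add_card_filter_not (s := A) (fun x ↦ x * g ∈ A)]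
    gcongr
  have hcount : ∑ g ∈ b, #{x ∈ A | x * g ∈ A} ≤ #A * #A := by
    calc ∑ g ∈ b, #{x ∈ A | x * g ∈ A} = ∑ x ∈ A, #{g ∈ b | x * g ∈ A} :=
          (Finset.sum_card_bipartiteAbove_eq_sum_card_bipartiteBelow fun x g ↦ x * g ∈ A).symm
      _ ≤ ∑ _ ∈ A, #A := by
          refine Finset.sum_le_sum fun x _ ↦ Finset.card_le_card_of_injOn (x * ·) ?_
            (mul_right_injective x).injOn
          intro g hg
          exact (Finset.mem_filter.1 hg).2
      _ = #A * #A := by rw [Finset.sum_const, smul_eq_mul]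
  have hsum : #b * #A ≤ #A * #A + #b * E := by
    calc #b * #A = ∑ _ ∈ b, #A := by rw [Finset.sum_const, smul_eq_mul]
      _ ≤ ∑ g ∈ b, (#{x ∈ A | x * g ∈ A} + E) := Finset.sum_le_sum hstay
      _ ≤ #A * #A + #b * E := by
          rw [Finset.sum_add_distrib, Finset.sum_const, smul_eq_mul]
          gcongr
  have hmul : #b * #A ≤ #b * (2 * E) := by nlinarith [Nat.mul_le_mul_right #A hAb]
  exact_mod_cast le_of_mul_le_mul_left hmul hb.card_pos

/-- The `N`-dimensional isoperimetric inequality `#A ^ (1 - 1 / N) ≤ κ * #∂A` for finite sets, with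
both sides multiplied by `#A ^ (1 / N)`. -/
def IsoperimetricWith (S : Finset G) (κ : ℝ≥0) (N : ℝ) : Prop :=
  ∀ A : Set G, A.Finite →
    (A.encard : ℝ≥0∞) ≤ κ * (A.encard : ℝ≥0∞) ^ (1 / N) * ∑ s ∈ S, (exitCard A s : ℝ≥0∞)

theorem exists_nat_two_mul_le_mul_pow {C₁ : ℝ≥0} (hC₁ : 0 < C₁) {N : ℕ} (hN : N ≠ 0) {a : ℝ≥0}
    (ha : 1 ≤ a) :
    ∃ n : ℕ, 1 ≤ n ∧ 2 * a ≤ C₁ * n ^ N ∧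
      n ≤ ((2 / C₁) ^ (1 / N : ℝ) + 1) * a ^ (1 / N : ℝ) := by
  have hroot (b : ℝ≥0) : (b ^ (1 / N : ℝ)) ^ N = b := by
    rw [one_div, NNReal.rpow_inv_natCast_pow _ hN]
  set x := (2 / C₁) ^ (1 / N : ℝ) * a ^ (1 / N : ℝ) with hx
  have hx_pos : 0 < x := by positivity
  refine ⟨⌈x⌉₊, Nat.one_le_ceil_iff.2 hx_pos, ?_, ?_⟩
  · calc 2 * a = C₁ * x ^ N := by
          rw [hx, mul_pow, hroot, hroot, ← mul_assoc, mul_div_cancel₀ _ hC₁.ne']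
      _ ≤ C₁ * (⌈x⌉₊ : ℝ≥0) ^ N := by
          gcongr
          exact Nat.le_ceil x
  · calc (⌈x⌉₊ : ℝ≥0) ≤ x + 1 := (Nat.ceil_lt_add_one hx_pos.le).le
      _ ≤ x + a ^ (1 / N : ℝ) := by
          gcongr
          exact NNReal.one_le_rpow ha (by positivity)
      _ = _ := by rw [hx, add_mul, one_mul]

theorem exists_isoperimetricWith_of_le_ncard_wordBall (hS_gen : Subgroup.closure (S : Set G) = ⊤)
    (hS_sym : ∀ s ∈ S, s⁻¹ ∈ S) {C₁ : ℝ≥0} (hC₁ : 0 < C₁) {N : ℕ} (hN : N ≠ 0)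
    (hball : ∀ n : ℕ, 1 ≤ n → C₁ * (n : ℝ≥0) ^ N ≤ (wordBall S n).ncard) :
    ∃ κ : ℝ≥0, IsoperimetricWith S κ N := by
  refine ⟨2 * ((2 / C₁) ^ (1 / N : ℝ) + 1), fun A hA ↦ ?_⟩
  lift A to Finset G using hA
  rcases A.eq_empty_or_nonempty with rfl | hA_ne
  · simp
  obtain ⟨n, hn, hAn, hnA⟩ := exists_nat_two_mul_le_mul_pow hC₁ hN (a := A.card)
    (by exact_mod_cast hA_ne.card_pos)
  have hcard : 2 * A.card ≤ (wordBall S n).ncard := by exact_mod_cast hAn.trans (hball n hn)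
  have hfin : (wordBall S n).Finite :=
    finite_of_ncard_ne_zero (by have := hA_ne.card_pos; omega)
  rw [ncard_eq_toFinset_card _ hfin] at hcard
  have hexit (g : G) (hg : g ∈ hfin.toFinset) :
      exitCard (A : Set G) g ≤ n * ∑ s ∈ S, exitCard (A : Set G) s := by
    obtain ⟨l, hl, hlen, hgl⟩ := exists_list_length_eq_wordDist hS_gen hS_sym 1 g
    rw [hgl, one_mul]
    refine (exitCard_list_prod_le _ hl).trans ?_
    gcongr
    rw [hlen]
    exact hfin.mem_toFinset.1 hg
  have hb_ne : hfin.toFinset.Nonempty :=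
    Finset.card_pos.1 (by have := hA_ne.card_pos; omega)
  have hmain := ENat.toENNReal_le.2 (card_le_two_mul_of_forall_exitCard_le hb_ne hcard hexit)
  have hcast : ((∑ s ∈ S, exitCard (A : Set G) s : ℕ∞) : ℝ≥0∞) =
      ∑ s ∈ S, (exitCard (A : Set G) s : ℝ≥0∞) := map_sum ENat.toENNRealRingHom _ _
  rw [encard_coe_eq_coe_finsetCard]
  push_cast [hcast] at hmain ⊢
  calc (A.card : ℝ≥0∞) ≤ 2 * (n * ∑ s ∈ S, (exitCard (A : Set G) s : ℝ≥0∞)) := hmain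
    _ ≤ 2 * ((((2 / C₁) ^ (1 / N : ℝ) + 1) * A.card ^ (1 / N : ℝ) : ℝ≥0) *
          ∑ s ∈ S, (exitCard (A : Set G) s : ℝ≥0∞)) := by
        gcongr
        exact_mod_cast hnA
    _ = _ := by
        rw [ENNReal.coe_mul, ENNReal.coe_rpow_of_nonneg _ (by positivity), ENNReal.coe_natCast]
        push_cast
        ring

end Isoperimetry

section LayerCake

variable {X : Type*} {m c : ℝ}

theorem encard_eq_tsum_indicator_Ico (a b : X → ℝ≥0) (t : ℝ) :
    ({x | t ∈ Ico (b x : ℝ) (a x)}.encard : ℝ≥0∞) =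
      ∑' x, (Ico (b x : ℝ) (a x)).indicator (1 : ℝ → ℝ≥0∞) t := by
  rw [← ENNReal.tsum_set_one, tsum_subtype _ fun _ ↦ (1 : ℝ≥0∞)]
  rfl

theorem measurable_encard_Ico [Countable X] (a b : X → ℝ≥0) :
    Measurable fun t : ℝ ↦ ({x | t ∈ Ico (b x : ℝ) (a x)}.encard : ℝ≥0∞) := by
  simp only [encard_eq_tsum_indicator_Ico]
  exact .tsum fun x ↦ measurable_one.indicator measurableSet_Ico

theorem lintegral_indicator_Ico_mul_rpow_le (hc : 0 ≤ c) (a b : ℝ≥0) :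
    ∫⁻ t in Ioi (0 : ℝ), (Ico (b : ℝ) a).indicator (1 : ℝ → ℝ≥0∞) t * ENNReal.ofReal (t ^ c) ≤
      (nndist b a * a ^ c : ℝ≥0) := by
  calc ∫⁻ t in Ioi (0 : ℝ), (Ico (b : ℝ) a).indicator (1 : ℝ → ℝ≥0∞) t * ENNReal.ofReal (t ^ c)
      ≤ ∫⁻ t in Ioi (0 : ℝ), (Ico (b : ℝ) a).indicator (fun _ ↦ ((a ^ c : ℝ≥0) : ℝ≥0∞)) t := by
        refine setLIntegral_mono' measurableSet_Ioi fun t (ht : 0 < t) ↦ ?_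
        by_cases hta : t ∈ Ico (b : ℝ) a
        · rw [indicator_of_mem hta, indicator_of_mem hta, Pi.one_apply, one_mul,
            ← ENNReal.ofReal_coe_nnreal, NNReal.coe_rpow]
          exact ENNReal.ofReal_le_ofReal (Real.rpow_le_rpow ht.le hta.2.le hc)
        · rw [indicator_of_notMem hta, zero_mul]
          exact zero_le
    _ ≤ ∫⁻ t, (Ico (b : ℝ) a).indicator (fun _ ↦ ((a ^ c : ℝ≥0) : ℝ≥0∞)) t :=
        setLIntegral_le_lintegral _ _
    _ = (a ^ c : ℝ≥0) * ENNReal.ofReal (a - b) := by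
        rw [lintegral_indicator measurableSet_Ico, setLIntegral_const, Real.volume_Ico]
    _ ≤ (nndist b a * a ^ c : ℝ≥0) := by
        rw [mul_comm, ENNReal.coe_mul]
        gcongr
        rw [← ENNReal.ofReal_coe_nnreal, coe_nndist, dist_comm, NNReal.dist_eq]
        exact ENNReal.ofReal_le_ofReal (le_abs_self _)

theorem lintegral_encard_mul_rpow_le [Countable X] (hc : 0 ≤ c) (a b : X → ℝ≥0) :
    ∫⁻ t in Ioi (0 : ℝ), ({x | t ∈ Ico (b x : ℝ) (a x)}.encard : ℝ≥0∞) * ENNReal.ofReal (t ^ c) ≤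
      ∑' x, ((nndist (b x) (a x) * a x ^ c : ℝ≥0) : ℝ≥0∞) := by
  have hmeas (x : X) : Measurable fun t : ℝ ↦
      (Ico (b x : ℝ) (a x)).indicator (1 : ℝ → ℝ≥0∞) t * ENNReal.ofReal (t ^ c) :=
    (measurable_one.indicator measurableSet_Ico).mul (by fun_prop)
  simp only [encard_eq_tsum_indicator_Ico, ← ENNReal.tsum_mul_right]
  rw [lintegral_tsum fun x ↦ (hmeas x).aemeasurable]
  exact ENNReal.tsum_le_tsum fun x ↦ lintegral_indicator_Ico_mul_rpow_le hc (a x) (b x)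

theorem tsum_rpow_eq_lintegral_encard (hm : 0 < m) (v : X → ℝ≥0) :
    ∑' x, ((v x ^ m : ℝ≥0) : ℝ≥0∞) = ENNReal.ofReal m *
      ∫⁻ t in Ioi (0 : ℝ), ({x | t < v x}.encard : ℝ≥0∞) * ENNReal.ofReal (t ^ (m - 1)) := by
  let _ : MeasurableSpace X := ⊤
  have h := lintegral_rpow_eq_lintegral_meas_lt_mul (Measure.count (α := X))
    (f := fun x ↦ (v x : ℝ)) (.of_forall fun x ↦ (v x).coe_nonneg)
    measurable_from_top.aemeasurable hm
  simpa only [lintegral_count, ← NNReal.coe_rpow, ENNReal.ofReal_coe_nnreal,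
    Measure.count_apply MeasurableSpace.measurableSet_top] using h

theorem encard_mul_rpow_le_tsum (hm : 0 ≤ m) (v : X → ℝ≥0) {t : ℝ} (ht : 0 < t) :
    ({x | t < v x}.encard : ℝ≥0∞) * ENNReal.ofReal (t ^ m) ≤ ∑' x, ((v x ^ m : ℝ≥0) : ℝ≥0∞) := by
  calc ({x | t < v x}.encard : ℝ≥0∞) * ENNReal.ofReal (t ^ m)
      = ∑' _ : {x | t < v x}, ENNReal.ofReal (t ^ m) := (ENNReal.tsum_set_const _ _).symm
    _ ≤ ∑' x : {x | t < v x}, ((v x ^ m : ℝ≥0) : ℝ≥0∞) := by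
        refine ENNReal.tsum_le_tsum fun x ↦ ?_
        rw [← ENNReal.ofReal_coe_nnreal, NNReal.coe_rpow]
        exact ENNReal.ofReal_le_ofReal (Real.rpow_le_rpow ht.le (le_of_lt x.2) hm)
    _ ≤ ∑' x, ((v x ^ m : ℝ≥0) : ℝ≥0∞) :=
        ENNReal.tsum_comp_le_tsum_of_injective Subtype.val_injective
          fun x ↦ ((v x ^ m : ℝ≥0) : ℝ≥0∞)

end LayerCake

section Sobolev

variable [Group G] {S : Finset G} {κ : ℝ≥0} {N m c : ℝ} {v : G → ℝ≥0}

theorem IsoperimetricWith.encard_mul_rpow_le (h : IsoperimetricWith S κ N) (hN : 0 < N)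
    (hm : 0 < m) (hc : m / N + c = m - 1) (hv : ∑' x, ((v x ^ m : ℝ≥0) : ℝ≥0∞) ≠ ⊤) {t : ℝ}
    (ht : 0 < t) :
    ({x | t < v x}.encard : ℝ≥0∞) * ENNReal.ofReal (t ^ (m - 1)) ≤
      κ * (∑' x, ((v x ^ m : ℝ≥0) : ℝ≥0∞)) ^ (1 / N) *
        ∑ s ∈ S, (exitCard {x | t < v x} s : ℝ≥0∞) * ENNReal.ofReal (t ^ c) := by
  set A := {x | t < v x}
  have hmarkov := encard_mul_rpow_le_tsum hm.le v ht
  have hfin : A.Finite := by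
    rw [← encard_ne_top_iff, ← ENat.toENNReal_ne_top]
    refine fun htop ↦ hv (top_unique ?_)
    rwa [htop, ENNReal.top_mul (by positivity)] at hmarkov
  have hpow : ENNReal.ofReal (t ^ (m - 1)) =
      ENNReal.ofReal (t ^ m) ^ (1 / N) * ENNReal.ofReal (t ^ c) := by
    rw [ENNReal.ofReal_rpow_of_pos (by positivity), ← Real.rpow_mul ht.le, mul_one_div,
      ← ENNReal.ofReal_mul (by positivity), ← Real.rpow_add ht, hc]
  calc (A.encard : ℝ≥0∞) * ENNReal.ofReal (t ^ (m - 1))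
      ≤ κ * (A.encard : ℝ≥0∞) ^ (1 / N) * (∑ s ∈ S, (exitCard A s : ℝ≥0∞)) *
          (ENNReal.ofReal (t ^ m) ^ (1 / N) * ENNReal.ofReal (t ^ c)) := by
        rw [hpow]
        gcongr
        exact h A hfin
    _ = κ * (A.encard * ENNReal.ofReal (t ^ m)) ^ (1 / N) *
          ∑ s ∈ S, (exitCard A s : ℝ≥0∞) * ENNReal.ofReal (t ^ c) := by
        rw [ENNReal.mul_rpow_of_nonneg _ _ (by positivity), ← Finset.sum_mul]
        ring
    _ ≤ _ := by gcongr

theorem exitCard_superlevel (v : G → ℝ≥0) (g : G) (t : ℝ) :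
    exitCard {x | t < v x} g = {x | t ∈ Ico (v (x * g) : ℝ) (v x)}.encard := by
  simp only [exitCard, mem_ofPred_eq, mem_Ico, not_lt, and_comm]

theorem lintegral_exitCard_mul_rpow_le [Countable G] (hc : 0 ≤ c) (v : G → ℝ≥0) (g : G) :
    ∫⁻ t in Ioi (0 : ℝ), (exitCard {x | t < v x} g : ℝ≥0∞) * ENNReal.ofReal (t ^ c) ≤
      ∑' x, ((nndist (v (x * g)) (v x) * v x ^ c : ℝ≥0) : ℝ≥0∞) := by
  simp only [exitCard_superlevel]
  exact lintegral_encard_mul_rpow_le hc v fun x ↦ v (x * g)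

theorem IsoperimetricWith.tsum_rpow_le [Countable G] (h : IsoperimetricWith S κ N) (hN : 0 < N)
    (hm : 0 < m) (hc_nonneg : 0 ≤ c) (hc : m / N + c = m - 1)
    (hv : ∑' x, ((v x ^ m : ℝ≥0) : ℝ≥0∞) ≠ ⊤) :
    ∑' x, ((v x ^ m : ℝ≥0) : ℝ≥0∞) ≤ ENNReal.ofReal m *
      (κ * (∑' x, ((v x ^ m : ℝ≥0) : ℝ≥0∞)) ^ (1 / N) *
        ∑ s ∈ S, ∑' x, ((nndist (v (x * s)) (v x) * v x ^ c : ℝ≥0) : ℝ≥0∞)) := by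
  set M := ∑' x, ((v x ^ m : ℝ≥0) : ℝ≥0∞)
  have hM_rpow : κ * M ^ (1 / N) ≠ ⊤ :=
    ENNReal.mul_ne_top ENNReal.coe_ne_top (ENNReal.rpow_ne_top_of_nonneg (by positivity) hv)
  calc M = ENNReal.ofReal m * ∫⁻ t in Ioi (0 : ℝ),
        ({x | t < v x}.encard : ℝ≥0∞) * ENNReal.ofReal (t ^ (m - 1)) :=
        tsum_rpow_eq_lintegral_encard hm v
    _ ≤ ENNReal.ofReal m * ∫⁻ t in Ioi (0 : ℝ), κ * M ^ (1 / N) *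
          ∑ s ∈ S, (exitCard {x | t < v x} s : ℝ≥0∞) * ENNReal.ofReal (t ^ c) := by
        gcongr 1
        exact setLIntegral_mono' measurableSet_Ioi fun t ht ↦ h.encard_mul_rpow_le hN hm hc hv ht
    _ = ENNReal.ofReal m * (κ * M ^ (1 / N) * ∑ s ∈ S, ∫⁻ t in Ioi (0 : ℝ),
          (exitCard {x | t < v x} s : ℝ≥0∞) * ENNReal.ofReal (t ^ c)) := by
        rw [lintegral_const_mul' _ _ hM_rpow, lintegral_finsetSum _ fun s _ ↦ ?_]
        simp only [exitCard_superlevel]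
        exact (measurable_encard_Ico v fun x ↦ v (x * s)).mul (by fun_prop)
    _ ≤ _ := by
        gcongr with s
        exact lintegral_exitCard_mul_rpow_le hc_nonneg v s

theorem rpow_le_of_le_mul_rpow_one_sub {a b : ℝ≥0∞} {e : ℝ} (ha : a ≠ ⊤) (he : 0 < e)
    (h : a ≤ b * a ^ (1 - e)) : a ^ e ≤ b := by
  rcases eq_or_ne a 0 with rfl | ha0
  · simp [ENNReal.zero_rpow_of_pos he]
  have hpos : a ^ (1 - e) ≠ 0 := (ENNReal.rpow_pos (pos_iff_ne_zero.2 ha0) ha).ne'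
  refine (ENNReal.mul_le_mul_iff_left hpos (ENNReal.rpow_ne_top_of_ne_zero ha0 ha)).1 ?_
  rwa [← ENNReal.rpow_add _ _ ha0 ha, add_sub_cancel, ENNReal.rpow_one]

theorem tsum_ofReal_eq_ofReal_rpow {X : Type*} {f : X → ℝ} (hf : ∀ x, 0 ≤ f x) (hfs : Summable f)
    {q : ℝ} (hq : 0 < q) :
    ∑' x, ENNReal.ofReal (f x) = ENNReal.ofReal ((∑' x, f x) ^ (1 / q)) ^ q := by
  rw [ENNReal.ofReal_rpow_of_nonneg (Real.rpow_nonneg (tsum_nonneg hf) _) hq.le,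
    one_div, Real.rpow_inv_rpow (tsum_nonneg hf) hq.ne', ENNReal.ofReal_tsum_of_nonneg hf hfs]

theorem tsum_nnnorm_rpow_eq {X : Type*} {u : X → ℝ} {q : ℝ} (hq : 0 < q) (hu : Memlp q u) :
    ∑' x, ((‖u x‖₊ ^ q : ℝ≥0) : ℝ≥0∞) = ENNReal.ofReal (lpNorm q u) ^ q := by
  rw [lpNorm, ← tsum_ofReal_eq_ofReal_rpow (fun x ↦ by positivity) hu hq]
  refine tsum_congr fun x ↦ ?_
  rw [← ENNReal.ofReal_coe_nnreal, NNReal.coe_rpow, coe_nnnorm, Real.norm_eq_abs]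

theorem gradP_nonneg (S : Finset G) (q : ℝ) (u : G → ℝ) (x : G) : 0 ≤ gradP S q u x :=
  Finset.sum_nonneg fun _ _ ↦ by positivity

theorem D1Norm_nonneg (S : Finset G) (q : ℝ) (u : G → ℝ) : 0 ≤ D1Norm S q u :=
  Real.rpow_nonneg (tsum_nonneg (gradP_nonneg S q u)) _

theorem tsum_nndist_nnnorm_rpow_le {u : G → ℝ} {q : ℝ} (hq : 0 < q) (hu : Summable (gradP S q u))
    {s : G} (hs : s ∈ S) :
    ∑' x, ((nndist ‖u (x * s)‖₊ ‖u x‖₊ ^ q : ℝ≥0) : ℝ≥0∞) ≤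
      ENNReal.ofReal (D1Norm S q u) ^ q := by
  rw [D1Norm, ← tsum_ofReal_eq_ofReal_rpow (gradP_nonneg S q u) hu hq]
  refine ENNReal.tsum_le_tsum fun x ↦ ?_
  rw [← ENNReal.ofReal_coe_nnreal, NNReal.coe_rpow]
  refine ENNReal.ofReal_le_ofReal ?_
  calc (nndist ‖u (x * s)‖₊ ‖u x‖₊ : ℝ) ^ q ≤ |u (x * s) - u x| ^ q := by
        gcongr
        exact abs_norm_sub_norm_le _ _
    _ ≤ gradP S q u x :=
        Finset.single_le_sum (f := fun s ↦ |u (x * s) - u x| ^ q) (fun _ _ ↦ by positivity) hs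

theorem tsum_nndist_nnnorm_mul_rpow_le {u : G → ℝ} {q q' : ℝ} (hq : q.HolderConjugate q')
    (hu : Summable (gradP S q u)) {s : G} (hs : s ∈ S) :
    ∑' x, ((nndist ‖u (x * s)‖₊ ‖u x‖₊ * ‖u x‖₊ ^ (m / q') : ℝ≥0) : ℝ≥0∞) ≤
      ENNReal.ofReal (D1Norm S q u) * (∑' x, ((‖u x‖₊ ^ m : ℝ≥0) : ℝ≥0∞)) ^ (1 / q') := by
  simp only [ENNReal.coe_mul]
  refine (tsum_mul_le_Lp_mul_Lq hq _ _).trans ?_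
  gcongr
  · rw [one_div, ENNReal.rpow_inv_le_iff hq.pos]
    simpa only [ENNReal.coe_rpow_of_nonneg _ hq.nonneg] using
      tsum_nndist_nnnorm_rpow_le hq.pos hu hs
  · exact hq.symm.one_div_nonneg
  · rw [← ENNReal.coe_rpow_of_nonneg _ hq.symm.nonneg, ← NNReal.rpow_mul,
      div_mul_cancel₀ _ hq.symm.ne_zero]

theorem IsoperimetricWith.tsum_nnnorm_rpow_le [Countable G] (h : IsoperimetricWith S κ N)
    (hN : 0 < N) (hm : 0 < m) {q q' : ℝ} (hq : q.HolderConjugate q')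
    (hmN : m / N + m / q' = m - 1) {u : G → ℝ} (hu : ∑' x, ((‖u x‖₊ ^ m : ℝ≥0) : ℝ≥0∞) ≠ ⊤)
    (hgrad : Summable (gradP S q u)) :
    ∑' x, ((‖u x‖₊ ^ m : ℝ≥0) : ℝ≥0∞) ≤ ENNReal.ofReal m * (κ * S.card) *
      ENNReal.ofReal (D1Norm S q u) *
        (∑' x, ((‖u x‖₊ ^ m : ℝ≥0) : ℝ≥0∞)) ^ (1 / N + 1 / q') := by
  set M := ∑' x, ((‖u x‖₊ ^ m : ℝ≥0) : ℝ≥0∞)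
  calc M ≤ ENNReal.ofReal m * (κ * M ^ (1 / N) *
        ∑ s ∈ S, ∑' x, ((nndist ‖u (x * s)‖₊ ‖u x‖₊ * ‖u x‖₊ ^ (m / q') : ℝ≥0) : ℝ≥0∞)) :=
        h.tsum_rpow_le hN hm (div_nonneg hm.le hq.symm.nonneg) hmN hu
    _ ≤ ENNReal.ofReal m * (κ * M ^ (1 / N) *
          ∑ _ ∈ S, ENNReal.ofReal (D1Norm S q u) * M ^ (1 / q')) := by
        gcongr with s hs
        exact tsum_nndist_nnnorm_mul_rpow_le hq hgrad hs
    _ = _ := by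
        rw [ENNReal.rpow_add_of_nonneg _ _ (by positivity) hq.symm.one_div_nonneg,
          Finset.sum_const, nsmul_eq_mul]
        ring

theorem IsoperimetricWith.exists_lpNorm_le_mul_D1Norm [Countable G] {N : ℕ}
    (h : IsoperimetricWith S κ N) {q : ℝ} (hq : 1 < q) (hqN : q < N) :
    ∃ K : ℝ≥0, ∀ u : G → ℝ, MemD1p S N q u →
      lpNorm (N * q / (N - q)) u ≤ K * D1Norm S q u := by
  set m : ℝ := N * q / (N - q) with hm_def
  have hN : (0 : ℝ) < N := by linarith
  have hNq : (0 : ℝ) < N - q := by linarith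
  have hm : 0 < m := by positivity
  have hqq := Real.HolderConjugate.conjExponent hq
  set q' := q.conjExponent
  have hq' : 1 / q' = 1 - 1 / q := by
    rw [eq_sub_iff_add_eq', one_div, one_div]
    exact hqq.inv_add_inv_eq_one
  have hmN : m / N + m / q' = m - 1 := by
    rw [div_eq_mul_one_div m q', hq', hm_def]
    field_simp
    ring
  have hm_inv : 1 / (N : ℝ) + 1 / q' = 1 - 1 / m := by
    rw [hq', hm_def]
    field_simp
    ring
  refine ⟨m.toNNReal * (κ * S.card), fun u ⟨hu, hgrad⟩ ↦ ?_⟩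
  have hM := tsum_nnnorm_rpow_eq hm hu
  have hM_top : ∑' x, ((‖u x‖₊ ^ m : ℝ≥0) : ℝ≥0∞) ≠ ⊤ :=
    hM ▸ ENNReal.rpow_ne_top_of_nonneg hm.le ENNReal.ofReal_ne_top
  have hD := D1Norm_nonneg S q u
  have hroot := rpow_le_of_le_mul_rpow_one_sub hM_top (by positivity) <|
    hm_inv ▸ h.tsum_nnnorm_rpow_le hN hm hqq hmN hM_top hgrad
  rw [hM, one_div, ENNReal.rpow_rpow_inv hm.ne'] at hroot
  rw [← ENNReal.ofReal_le_ofReal_iff (by positivity), ENNReal.ofReal_mul NNReal.zero_le_coe,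
    ENNReal.ofReal_coe_nnreal]
  exact_mod_cast hroot

end Sobolev

section Energy

theorem lpNorm_nonneg {X : Type*} (q : ℝ) (u : X → ℝ) : 0 ≤ lpNorm q u :=
  Real.rpow_nonneg (tsum_nonneg fun _ ↦ by positivity) _

variable {X : Type*} {R : X → X → ℝ} {p : ℝ}

theorem ofReal_energy_le (hR : ∀ x y, 0 ≤ R x y) (u : X → ℝ) :
    ENNReal.ofReal (energy R p u) ≤
      ∑' x, ∑' y, ENNReal.ofReal (R x y) * (‖u y‖₊ ^ p * ‖u x‖₊ ^ p : ℝ≥0) := by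
  have hterm (x y : X) : 0 ≤ R x y * |u y| ^ p * |u x| ^ p :=
    mul_nonneg (mul_nonneg (hR x y) (by positivity)) (by positivity)
  simp only [energy, conv, ← tsum_mul_right]
  refine (ofReal_tsum_le fun x ↦ tsum_nonneg (hterm x)).trans <|
    ENNReal.tsum_le_tsum fun x ↦ (ofReal_tsum_le (hterm x)).trans_eq <| tsum_congr fun y ↦ ?_
  rw [mul_assoc, ENNReal.ofReal_mul (hR x y), ← ENNReal.ofReal_coe_nnreal]
  simp

theorem exists_energy_le_lpNorm {d : X → X → ℝ≥0} {c C : ℝ≥0} {N s m : ℝ}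
    (hR_nonneg : ∀ x y, 0 ≤ R x y) (hR : ∀ x y, R x y ≤ c * d x y ^ (-s))
    (hd_pos : ∀ x y, 0 < d x y) (hd_symm : ∀ x y, d x y = d y x)
    (hd : ∀ x, SublevelGrowthLE (d x) C N) (hs : 0 < s) (hsN : s < N) (hm : 0 < m)
    (hmp : m ≤ p * (2 * N / (2 * N - s))) :
    ∃ A : ℝ≥0, ∀ u : X → ℝ, Memlp m u → energy R p u ≤ A * lpNorm m u ^ (2 * p) := by
  obtain ⟨A, hA⟩ := exists_tsum_tsum_rpow_mul_mul_le hd_pos hd_symm hd hs hsN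
  refine ⟨c * A, fun u hu ↦ ?_⟩
  let L : ℝ≥0 := ⟨lpNorm m u, lpNorm_nonneg m u⟩
  have hL : ∑' x, ((‖u x‖₊ ^ m : ℝ≥0) : ℝ≥0∞) ≤ (L ^ m : ℝ≥0) := by
    rw [tsum_nnnorm_rpow_eq hm hu, ENNReal.coe_rpow_of_nonneg _ hm.le,
      ← ENNReal.ofReal_coe_nnreal (p := L)]
    exact le_rfl
  have hfr : ∑' x, (((‖u x‖₊ ^ p) ^ (2 * N / (2 * N - s)) : ℝ≥0) : ℝ≥0∞) ≤
      ((L ^ p) ^ (2 * N / (2 * N - s)) : ℝ≥0) := by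
    simpa only [NNReal.rpow_mul] using tsum_rpow_le_of_exponent_le hm hmp hL
  have hmain : ENNReal.ofReal (energy R p u) ≤ (c * A * L ^ (2 * p) : ℝ≥0) := by
    calc ENNReal.ofReal (energy R p u)
        ≤ ∑' x, ∑' y, ENNReal.ofReal (R x y) * (‖u y‖₊ ^ p * ‖u x‖₊ ^ p : ℝ≥0) :=
          ofReal_energy_le hR_nonneg u
      _ ≤ ∑' x, ∑' y, (c : ℝ≥0∞) * (d x y ^ (-s) * ‖u y‖₊ ^ p * ‖u x‖₊ ^ p : ℝ≥0) := by
          refine ENNReal.tsum_le_tsum fun x ↦ ENNReal.tsum_le_tsum fun y ↦ ?_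
          rw [mul_assoc, ENNReal.coe_mul (d x y ^ (-s)), ← mul_assoc, ← ENNReal.coe_mul]
          gcongr
          exact ENNReal.ofReal_le_of_le_toReal (by exact_mod_cast hR x y)
      _ ≤ c * (A * (L ^ p) ^ 2 : ℝ≥0) := by
          simp only [ENNReal.tsum_mul_left]
          gcongr
          exact hA hfr
      _ = (c * A * L ^ (2 * p) : ℝ≥0) := by
          rw [← NNReal.rpow_two, ← NNReal.rpow_mul, mul_comm p, ← ENNReal.coe_mul, mul_assoc]
  rw [ENNReal.ofReal_le_iff_le_toReal ENNReal.coe_ne_top] at hmain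
  exact_mod_cast hmain

end Energy

section SobolevType

variable [Group G]

theorem le_mul_regularizedDist_rpow {S : Finset G} (hS_gen : Subgroup.closure (S : Set G) = ⊤)
    (hS_sym : ∀ s ∈ S, s⁻¹ ∈ S) {R : G → G → ℝ} {c e : ℝ}
    (hR : ∀ x y, x ≠ y → R x y ≤ c * (wordDist S x y : ℝ) ^ e) (hR_diag : ∀ x, R x x ≤ c)
    (x y : G) : R x y ≤ c * (regularizedDist S x y : ℝ) ^ e := by
  rcases eq_or_ne x y with rfl | hxy
  · simpa [regularizedDist, wordDist_self] using hR_diag x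
  · have h : (1 : ℝ≥0) ≤ wordDist S x y := by exact_mod_cast one_le_wordDist hS_gen hS_sym hxy
    simpa [regularizedDist, max_eq_right h] using hR x y hxy

theorem gradP_two (S : Finset G) (u : G → ℝ) : gradP S 2 u = gradSq S u := by
  funext x
  simp only [gradP, gradSq, Real.rpow_two, sq_abs]

theorem D1Norm_two (S : Finset G) (u : G → ℝ) : D1Norm S 2 u = D12Norm S u := by
  rw [D1Norm, D12Norm, gradP_two]

theorem memD1p_two_iff (S : Finset G) (N : ℕ) (u : G → ℝ) : MemD1p S N 2 u ↔ MemD12 S N u := by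
  rw [MemD1p, MemD12, gradP_two, mul_comm]

theorem sobolev_exponent_le_mul {N q α p : ℝ} (hN : 0 < N) (hqN : q < N) (hα : 0 < N + α)
    (hp : q * (N + α) / (2 * (N - q)) ≤ p) :
    N * q / (N - q) ≤ p * (2 * N / (2 * N - (N - α))) := by
  have hNq : 0 < N - q := sub_pos.2 hqN
  have hsum : 2 * N - (N - α) = N + α := by ring
  rw [hsum]
  calc N * q / (N - q) = q * (N + α) / (2 * (N - q)) * (2 * N / (N + α)) := by field_simp
    _ ≤ p * (2 * N / (N + α)) := by gcongr

theorem sobolev_type_inequality_general [Countable G]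
    (S : Finset G) (hS_gen : Subgroup.closure (S : Set G) = ⊤) (hS_sym : ∀ s ∈ S, s⁻¹ ∈ S)
    (N : ℕ) (q : ℝ) (hq : 1 < q) (hqN : q < N) (C₁ C₂ : ℝ) (hC₁ : 0 < C₁)
    (hgrowth : ∀ n : ℕ, 1 ≤ n →
      C₁ * (n : ℝ) ^ N ≤ (Nat.card {x : G // wordDist S 1 x ≤ n} : ℝ) ∧
      (Nat.card {x : G // wordDist S 1 x ≤ n} : ℝ) ≤ C₂ * (n : ℝ) ^ N)
    (α : ℝ) (hα : 0 < α) (hαN : α < N)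
    (Rα : G → G → ℝ) (hR_nonneg : ∀ x y, 0 ≤ Rα x y) (c₂ : ℝ)
    (hR_up : ∀ x y : G, x ≠ y → Rα x y ≤ c₂ * (wordDist S x y : ℝ) ^ (α - (N : ℝ)))
    (hR_diag : ∀ x : G, Rα x x ≤ c₂)
    (p : ℝ) (hp : q * (N + α) / (2 * (N - q)) ≤ p) :
    ∃ C : ℝ, 0 < C ∧ ∀ u : G → ℝ, MemD1p S N q u →
      energy Rα p u ≤ C * D1Norm S q u ^ (2 * p) := by
  lift C₁ to ℝ≥0 using hC₁.le
  lift C₂ to ℝ≥0 using by simpa using (Nat.cast_nonneg _).trans (hgrowth 1 le_rfl).2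
  lift c₂ to ℝ≥0 using (hR_nonneg 1 1).trans (hR_diag 1)
  have hN_pos : (0 : ℝ) < N := by linarith
  have hp_pos : 0 < p := hp.trans_lt' (by positivity)
  have hlower (n : ℕ) (hn : 1 ≤ n) : C₁ * (n : ℝ≥0) ^ N ≤ (wordBall S n).ncard := by
    exact_mod_cast (hgrowth n hn).1
  have hupper (n : ℕ) (hn : 1 ≤ n) : ((wordBall S n).encard : ℝ≥0∞) ≤ (C₂ * n ^ N : ℝ≥0) :=
    encard_wordBall_le_of_ncard (by exact_mod_cast hC₁) hn (hlower n hn)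
      (by exact_mod_cast (hgrowth n hn).2)
  obtain ⟨κ, hκ⟩ := exists_isoperimetricWith_of_le_ncard_wordBall hS_gen hS_sym
    (by exact_mod_cast hC₁) (Nat.cast_pos.1 hN_pos).ne' hlower
  obtain ⟨K, hK⟩ := hκ.exists_lpNorm_le_mul_D1Norm hq hqN
  obtain ⟨A, hA⟩ := exists_energy_le_lpNorm hR_nonneg
    (fun x y ↦ neg_sub (N : ℝ) α ▸ le_mul_regularizedDist_rpow hS_gen hS_sym hR_up hR_diag x y)
    regularizedDist_pos (regularizedDist_comm hS_gen hS_sym)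
    (sublevelGrowthLE_regularizedDist hupper) (sub_pos.2 hαN) (sub_lt_self _ hα)
    (by positivity) (sobolev_exponent_le_mul hN_pos hqN (by linarith) hp)
  refine ⟨A * K ^ (2 * p) + 1, by positivity, fun u hu ↦ ?_⟩
  calc energy Rα p u ≤ A * lpNorm (N * q / (N - q)) u ^ (2 * p) := hA u hu.1
    _ ≤ A * (K * D1Norm S q u) ^ (2 * p) := by
        gcongr
        · exact lpNorm_nonneg _ u
        · exact hK u hu
    _ = A * K ^ (2 * p) * D1Norm S q u ^ (2 * p) := by
        rw [Real.mul_rpow K.coe_nonneg (D1Norm_nonneg S q u), mul_assoc]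
    _ ≤ (A * K ^ (2 * p) + 1) * D1Norm S q u ^ (2 * p) :=
        mul_le_mul_of_nonneg_right (le_add_of_nonneg_right zero_le_one)
          (Real.rpow_nonneg (D1Norm_nonneg S q u) _)

end SobolevType

theorem sobolev_type_inequality
    [Group G] [Countable G]
    (S : Finset G) (hS_gen : Subgroup.closure (S : Set G) = ⊤)
    (hS_sym : ∀ s ∈ S, s⁻¹ ∈ S) (hS_e : (1 : G) ∉ S)
    (N : ℕ) (hN : 3 ≤ N)
    (C₁ C₂ : ℝ) (hC₁ : 0 < C₁) (hC₂ : 0 < C₂)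
    (hgrowth : ∀ n : ℕ, 1 ≤ n →
      C₁ * (n : ℝ) ^ N ≤ (Nat.card {x : G // wordDist S 1 x ≤ n} : ℝ) ∧
      (Nat.card {x : G // wordDist S 1 x ≤ n} : ℝ) ≤ C₂ * (n : ℝ) ^ N)
    (α : ℝ) (hα : 0 < α) (hαN : α < N)
    (Rα : G → G → ℝ) (hR_nonneg : ∀ x y, 0 ≤ Rα x y)
    (hR_symm : ∀ x y, Rα x y = Rα y x)
    (c₁ c₂ : ℝ) (hc₁ : 0 < c₁) (hc₂ : 0 < c₂)
    (hR_low : ∀ x y : G, x ≠ y → c₁ * (wordDist S x y : ℝ) ^ (α - (N : ℝ)) ≤ Rα x y)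
    (hR_up : ∀ x y : G, x ≠ y → Rα x y ≤ c₂ * (wordDist S x y : ℝ) ^ (α - (N : ℝ)))
    (hR_diag : ∀ x : G, Rα x x ≤ c₂)
    (p : ℝ) (hp : ((N : ℝ) + α) / ((N : ℝ) - 2) ≤ p) :
    ∃ C : ℝ, 0 < C ∧ ∀ u : G → ℝ, MemD12 S N u →
      (∑' x, conv Rα (fun y => |u y| ^ p) x * |u x| ^ p) ≤
        C * D12Norm S u ^ (2 * p) := by
  have hN2 : (2 : ℝ) < N := by exact_mod_cast hN
  obtain ⟨C, hC, hle⟩ := sobolev_type_inequality_general S hS_gen hS_sym N 2 one_lt_two hN2 C₁ C₂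
    hC₁ hgrowth α hα hαN Rα hR_nonneg c₂ hR_up hR_diag p
    (by rwa [mul_div_mul_left _ _ two_ne_zero])
  exact ⟨C, hC, fun u hu ↦ D1Norm_two S u ▸ hle u ((memD1p_two_iff S N u).2 hu)⟩

end Choquard
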